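/- Fix a ∈ {2,…,K}. (i) For every N_1 > 0, the map N_a ↦ W_a(N_1, N_a) is strictly increasing on [0,∞), equals 0 at N_a = 0, converges to N_1·d(μ_1, μ_a) as N_a → ∞, and is differentiable with derivative equal to d(μ_a, x_{1,a}(N_1,N_a)) at every N_a. (ii) Consequently, for every I > 0 and every N_1 > I/d(μ_1, μ_a) there is a unique N_a(N_1) > 0 with W_a(N_1, N_a(N_1)) = I; the map N_1 ↦ N_a(N_1) is strictly decreasing on (I/d(μ_1,μ_a), ∞) and converges to I/d(μ_a, μ_1) as N_1 → ∞. -/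

import Mathlib

open scoped BigOperators

/-- A single-parameter exponential family, given by the log-partition function `b`,
smooth with positive second derivative on an open interval `Θ`, together with the
inverse `θof` of `b'` on the set of means `S = b'(Θ)`. -/
structure SPEF where
  Θ : Set ℝ
  Θ_isOpen : IsOpen Θ
  Θ_ordConnected : Set.OrdConnected Θ
  Θ_nonempty : Θ.Nonempty
  b : ℝ → ℝ
  b_smooth : ContDiffOn ℝ (⊤ : ℕ∞) b Θ
  b_conv : ∀ t ∈ Θ, 0 < iteratedDeriv 2 b t
  θof : ℝ → ℝ
  θof_mem : ∀ μ ∈ deriv b '' Θ, θof μ ∈ Θ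
  θof_spec : ∀ μ ∈ deriv b '' Θ, deriv b (θof μ) = μ

namespace SPEF

/-- The set of means of the family. -/
def S (F : SPEF) : Set ℝ := deriv F.b '' F.Θ

/-- KL divergence `d(μ, x)` between the members of the family with means `μ` and `x`. -/
noncomputable def d (F : SPEF) (μ x : ℝ) : ℝ :=
  (F.θof μ - F.θof x) * μ - F.b (F.θof μ) + F.b (F.θof x)

end SPEF

/-- A `K`-armed bandit instance with arm distributions in a fixed SPEF; arm `0`
(the paper's arm `1`) is the unique best arm. -/
structure Bandit (K : ℕ) [NeZero K] extends SPEF where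
  two_le : 2 ≤ K
  μ : Fin K → ℝ
  μ_mem : ∀ a, μ a ∈ SPEF.S toSPEF
  μ_best : ∀ a : Fin K, a ≠ 0 → μ a < μ 0

namespace Bandit

variable {K : ℕ} [NeZero K]

/-- KL divergence of the underlying family. -/
noncomputable def d (M : Bandit K) : ℝ → ℝ → ℝ := M.toSPEF.d

/-- The weighted mean `x_{1,a}(N₁, N_a)`. -/
noncomputable def x1 (M : Bandit K) (a : Fin K) (N1 Na : ℝ) : ℝ :=
  (N1 * M.μ 0 + Na * M.μ a) / (N1 + Na)

/-- The index `W_a(N₁, N_a)` of an arm `a ≠ 1`. -/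
noncomputable def W (M : Bandit K) (a : Fin K) (N1 Na : ℝ) : ℝ :=
  N1 * M.d (M.μ 0) (M.x1 a N1 Na) + Na * M.d (M.μ a) (M.x1 a N1 Na)

/-- The set `{2, …, K}` of suboptimal arms. -/
def alt (K : ℕ) [NeZero K] : Finset (Fin K) := Finset.univ.filter (fun a => a ≠ 0)

/-- The anchor function `g(μ, N)`. -/
noncomputable def g (M : Bandit K) (Nv : Fin K → ℝ) : ℝ :=
  (∑ a ∈ alt K, M.d (M.μ 0) (M.x1 a (Nv 0) (Nv a)) / M.d (M.μ a) (M.x1 a (Nv 0) (Nv a))) - 1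

end Bandit

open Bandit

/-!
The divergence `d` of a single-parameter exponential family measures the gap between `b` and its
tangent lines, so strict convexity of `b` makes it positive off the diagonal. With `x` the weighted
mean of `m` and `n` with weights `p` and `q`, the compensation identity
`p d(m, y) + q d(n, y) = (p d(m, x) + q d(n, x)) + (p + q) d(x, y)`
shows that the index is the minimum over `y` of a function that is linear in the weights. Comparing
the minimum at one weight with the competitor optimal at another gives strict monotonicity, the
competitors `y = m` and `y = n` give the two limiting upper bounds, and stationarity at the minimum
gives the derivative (the envelope theorem). The symmetry exchanging the two arms transfers these
facts from one weight to the other, which describes the level curves.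
-/

section

open Filter Set Topology

lemma add_mul_sub_lt_of_strictConvexOn {s : Set ℝ} {f : ℝ → ℝ} {f' x y : ℝ}
    (hf : StrictConvexOn ℝ s f) (hx : x ∈ s) (hy : y ∈ s) (hxy : x ≠ y)
    (hf' : HasDerivAt f f' x) : f x + f' * (y - x) < f y := by
  rcases hxy.lt_or_gt with h | h
  · have hslope := hf.lt_slope_of_hasDerivAt hx hy h hf'
    rw [slope_def_field, lt_div_iff₀ (sub_pos.2 h)] at hslope
    linarith
  · have hslope := hf.slope_lt_of_hasDerivAt hy hx h hf'
    rw [slope_def_field, div_lt_iff₀ (sub_pos.2 h)] at hslope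
    linarith

/-- The mean of `m` and `n` with weights `p` and `q`, written `x_{1,a}(p, q)` for the arms `1` and
`a` of a bandit. It takes the junk value `0` when `p + q = 0`. -/
noncomputable def weightedMean (m n p q : ℝ) : ℝ := (p * m + q * n) / (p + q)

section weightedMean

variable {m n p q : ℝ}

lemma weightedMean_comm (m n p q : ℝ) : weightedMean m n p q = weightedMean n m q p := by
  rw [weightedMean, weightedMean, add_comm (p * m), add_comm p]

lemma weightedMean_zero_right (m n : ℝ) (hp : p ≠ 0) : weightedMean m n p 0 = m := by
  simp [weightedMean, hp]

lemma add_mul_weightedMean (m n : ℝ) (h : p + q ≠ 0) :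
    (p + q) * weightedMean m n p q = p * m + q * n :=
  mul_div_cancel₀ _ h

lemma weightedMean_ne_right (hmn : m ≠ n) (hp : p ≠ 0) (h : p + q ≠ 0) :
    weightedMean m n p q ≠ n := by
  intro heq
  have hmul := add_mul_weightedMean m n h
  rw [heq] at hmul
  exact hmn (mul_left_cancel₀ hp (by linarith))

lemma weightedMean_mem {s : Set ℝ} (hs : Convex ℝ s) (hm : m ∈ s) (hn : n ∈ s) (hp : 0 ≤ p)
    (hq : 0 ≤ q) (h : 0 < p + q) : weightedMean m n p q ∈ s := by
  convert convex_iff_div.1 hs hm hn hp hq h using 1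
  simp only [weightedMean, smul_eq_mul]
  ring

lemma differentiableAt_weightedMean (m n : ℝ) (h : p + q ≠ 0) :
    DifferentiableAt ℝ (weightedMean m n p) q := by
  unfold weightedMean
  exact DifferentiableAt.fun_div (by fun_prop) (by fun_prop) h

lemma tendsto_weightedMean_atTop (m n p : ℝ) :
    Tendsto (weightedMean m n p) atTop (𝓝 n) := by
  have hlim : Tendsto (fun q : ℝ => n + p * (m - n) / (p + q)) atTop (𝓝 (n + 0)) :=
    tendsto_const_nhds.add
      (tendsto_const_nhds.div_atTop (tendsto_atTop_add_const_left _ p tendsto_id))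
  rw [add_zero] at hlim
  refine hlim.congr' ?_
  filter_upwards [eventually_gt_atTop (-p)] with q hq
  have hne : p + q ≠ 0 := by linarith
  rw [weightedMean]
  field_simp
  ring

end weightedMean

namespace SPEF

variable (F : SPEF) {m n p q x t I : ℝ}

lemma hasDerivAt_b (ht : t ∈ F.Θ) : HasDerivAt F.b (deriv F.b t) t :=
  ((F.b_smooth.contDiffAt (F.Θ_isOpen.mem_nhds ht)).differentiableAt (by simp)).hasDerivAt

lemma hasStrictDerivAt_deriv_b (ht : t ∈ F.Θ) :
    HasStrictDerivAt (deriv F.b) (iteratedDeriv 2 F.b t) t := by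
  have hb' : ContDiffOn ℝ 1 (deriv F.b) F.Θ :=
    F.b_smooth.deriv_of_isOpen F.Θ_isOpen (WithTop.coe_le_coe.2 (le_top : (1 + 1 : ℕ∞) ≤ ⊤))
  rw [iteratedDeriv_succ, iteratedDeriv_one]
  exact (hb'.contDiffAt (F.Θ_isOpen.mem_nhds ht)).hasStrictDerivAt one_ne_zero

lemma strictConvexOn_b : StrictConvexOn ℝ F.Θ F.b :=
  strictConvexOn_of_deriv2_pos' F.Θ_ordConnected.convex F.b_smooth.continuousOn fun t ht => by
    simpa only [iteratedDeriv_eq_iterate] using F.b_conv t ht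

lemma strictMonoOn_deriv_b : StrictMonoOn (deriv F.b) F.Θ :=
  F.strictConvexOn_b.strictMonoOn_deriv fun _ ht => (F.hasDerivAt_b ht).differentiableAt

lemma θof_deriv_b (ht : t ∈ F.Θ) : F.θof (deriv F.b t) = t :=
  F.strictMonoOn_deriv_b.injOn (F.θof_mem _ ⟨t, ht, rfl⟩) ht (F.θof_spec _ ⟨t, ht, rfl⟩)

lemma injOn_θof : InjOn F.θof F.S :=
  LeftInvOn.injOn F.θof_spec

lemma convex_S : Convex ℝ F.S := by
  have hcont : ContinuousOn (deriv F.b) F.Θ := fun _ ht =>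
    (F.hasStrictDerivAt_deriv_b ht).hasDerivAt.continuousAt.continuousWithinAt
  exact (F.Θ_ordConnected.isPreconnected.image _ hcont).ordConnected.convex

lemma hasStrictDerivAt_θof (hx : x ∈ F.S) :
    HasStrictDerivAt F.θof (iteratedDeriv 2 F.b (F.θof x))⁻¹ x := by
  obtain ⟨t, ht, rfl⟩ := hx
  rw [F.θof_deriv_b ht]
  refine (F.hasStrictDerivAt_deriv_b ht).to_local_left_inverse (F.b_conv t ht).ne' ?_
  filter_upwards [F.Θ_isOpen.mem_nhds ht] with s hs using F.θof_deriv_b hs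

lemma hasDerivAt_d (m : ℝ) (hx : x ∈ F.S) :
    HasDerivAt (F.d m) ((iteratedDeriv 2 F.b (F.θof x))⁻¹ * (x - m)) x := by
  have hθ := (F.hasStrictDerivAt_θof hx).hasDerivAt
  have hb := (F.hasDerivAt_b (F.θof_mem x hx)).comp x hθ
  rw [F.θof_spec x hx] at hb
  refine ((((hθ.const_sub (F.θof m)).mul_const m).sub_const (F.b (F.θof m))).add hb).congr_deriv ?_
  ring

@[simp]
lemma d_self (x : ℝ) : F.d x x = 0 := by simp [d]

lemma d_pos (hm : m ∈ F.S) (hx : x ∈ F.S) (hmx : m ≠ x) : 0 < F.d m x := by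
  have htangent := add_mul_sub_lt_of_strictConvexOn F.strictConvexOn_b (F.θof_mem m hm)
    (F.θof_mem x hx) (F.injOn_θof.ne hm hx hmx) (F.hasDerivAt_b (F.θof_mem m hm))
  rw [F.θof_spec m hm] at htangent
  rw [d]
  linarith

lemma d_nonneg (hm : m ∈ F.S) (hx : x ∈ F.S) : 0 ≤ F.d m x := by
  rcases eq_or_ne m x with rfl | hmx
  · exact (F.d_self m).ge
  · exact (F.d_pos hm hx hmx).le

/-- The transportation cost `p d(m, x) + q d(n, x)` at the weighted mean `x` of `m` and `n`. For the
arms `1` and `a` of a bandit it is the index `W_a(p, q)`; stated for two arbitrary means, it can be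
used with the two arms exchanged. -/
noncomputable def transportCost (m n p q : ℝ) : ℝ :=
  p * F.d m (weightedMean m n p q) + q * F.d n (weightedMean m n p q)

lemma transportCost_comm (m n p q : ℝ) : F.transportCost m n p q = F.transportCost n m q p := by
  rw [transportCost, transportCost, weightedMean_comm m n p q, add_comm]

lemma transportCost_zero_right (m n : ℝ) (hp : p ≠ 0) : F.transportCost m n p 0 = 0 := by
  rw [transportCost, weightedMean_zero_right m n hp, d_self, mul_zero, zero_mul, add_zero]

lemma mul_d_add_mul_d (m n : ℝ) (h : p + q ≠ 0) (y : ℝ) :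
    p * F.d m y + q * F.d n y =
      F.transportCost m n p q + (p + q) * F.d (weightedMean m n p q) y := by
  simp only [transportCost, d]
  linear_combination (F.θof y - F.θof (weightedMean m n p q)) * add_mul_weightedMean m n h

lemma transportCost_le {y : ℝ} (hm : m ∈ F.S) (hn : n ∈ F.S) (hp : 0 ≤ p) (hq : 0 ≤ q)
    (h : 0 < p + q) (hy : y ∈ F.S) :
    F.transportCost m n p q ≤ p * F.d m y + q * F.d n y := by
  rw [F.mul_d_add_mul_d m n h.ne']
  have hx := weightedMean_mem F.convex_S hm hn hp hq h
  exact le_add_of_nonneg_right (mul_nonneg h.le (F.d_nonneg hx hy))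

lemma transportCost_le_mul_d_left (hm : m ∈ F.S) (hn : n ∈ F.S) (hp : 0 ≤ p) (hq : 0 ≤ q)
    (h : 0 < p + q) : F.transportCost m n p q ≤ p * F.d m n := by
  simpa only [d_self, mul_zero, add_zero] using F.transportCost_le hm hn hp hq h hn

lemma transportCost_le_mul_d_right (hm : m ∈ F.S) (hn : n ∈ F.S) (hp : 0 ≤ p) (hq : 0 ≤ q)
    (h : 0 < p + q) : F.transportCost m n p q ≤ q * F.d n m := by
  simpa only [d_self, mul_zero, zero_add] using F.transportCost_le hm hn hp hq h hm

lemma strictMonoOn_transportCost_right (hm : m ∈ F.S) (hn : n ∈ F.S) (hmn : m ≠ n)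
    (hp : 0 < p) : StrictMonoOn (F.transportCost m n p) (Ici 0) := by
  intro q hq r hr hqr
  have hpq : 0 < p + q := add_pos_of_pos_of_nonneg hp hq
  have hpr : 0 < p + r := add_pos_of_pos_of_nonneg hp hr
  have hx := weightedMean_mem F.convex_S hm hn hp.le hr hpr
  have hpos := F.d_pos hn hx (weightedMean_ne_right hmn hp.ne' hpr.ne').symm
  calc F.transportCost m n p q
      ≤ p * F.d m (weightedMean m n p r) + q * F.d n (weightedMean m n p r) :=
        F.transportCost_le hm hn hp.le hq hpq hx
    _ < F.transportCost m n p r := by rw [transportCost]; gcongr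

lemma strictMonoOn_transportCost_left (hm : m ∈ F.S) (hn : n ∈ F.S) (hmn : m ≠ n)
    (hq : 0 < q) : StrictMonoOn (fun p => F.transportCost m n p q) (Ici 0) := by
  simpa only [F.transportCost_comm m n] using
    F.strictMonoOn_transportCost_right hn hm hmn.symm hq

lemma tendsto_transportCost_right (hm : m ∈ F.S) (hn : n ∈ F.S) (hp : 0 < p) :
    Tendsto (F.transportCost m n p) atTop (𝓝 (p * F.d m n)) := by
  have hlower : Tendsto (fun q => p * F.d m (weightedMean m n p q)) atTop (𝓝 (p * F.d m n)) :=
    ((F.hasDerivAt_d m hn).continuousAt.tendsto.comp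
      (tendsto_weightedMean_atTop m n p)).const_mul p
  refine tendsto_of_tendsto_of_tendsto_of_le_of_le' hlower tendsto_const_nhds ?_ ?_
  · filter_upwards [eventually_ge_atTop 0] with q hq
    have hx := weightedMean_mem F.convex_S hm hn hp.le hq (add_pos_of_pos_of_nonneg hp hq)
    exact le_add_of_nonneg_right (mul_nonneg hq (F.d_nonneg hn hx))
  · filter_upwards [eventually_ge_atTop 0] with q hq using
      F.transportCost_le_mul_d_left hm hn hp.le hq (add_pos_of_pos_of_nonneg hp hq)

lemma tendsto_transportCost_left (hm : m ∈ F.S) (hn : n ∈ F.S) (hq : 0 < q) :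
    Tendsto (fun p => F.transportCost m n p q) atTop (𝓝 (q * F.d n m)) := by
  simpa only [F.transportCost_comm m n] using F.tendsto_transportCost_right hn hm hq

lemma hasDerivAt_transportCost_right (h : p + q ≠ 0) (hx : weightedMean m n p q ∈ F.S) :
    HasDerivAt (F.transportCost m n p) (F.d n (weightedMean m n p q)) q := by
  have hmean := (differentiableAt_weightedMean m n h).hasDerivAt
  have hdm := (F.hasDerivAt_d m hx).comp q hmean
  have hdn := (F.hasDerivAt_d n hx).comp q hmean
  have hstationary : p * (weightedMean m n p q - m) + q * (weightedMean m n p q - n) = 0 := by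
    linear_combination add_mul_weightedMean m n h
  refine ((hdm.const_mul p).add ((hasDerivAt_id q).mul hdn)).congr_deriv ?_
  simp only [id, Function.comp_apply]
  linear_combination (iteratedDeriv 2 F.b (F.θof (weightedMean m n p q)))⁻¹ *
    deriv (weightedMean m n p) q * hstationary

lemma existsUnique_transportCost_eq (hm : m ∈ F.S) (hn : n ∈ F.S) (hmn : m ≠ n) (hI : 0 < I)
    (hp : I / F.d m n < p) : ∃! q : ℝ, 0 < q ∧ F.transportCost m n p q = I := by
  have hd := F.d_pos hm hn hmn
  have hp0 : 0 < p := (div_pos hI hd).trans hp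
  obtain ⟨r, hIr, hr⟩ : ∃ r, I < F.transportCost m n p r ∧ 0 ≤ r :=
    (((F.tendsto_transportCost_right hm hn hp0).eventually_const_lt ((div_lt_iff₀ hd).1 hp)).and
      (eventually_ge_atTop 0)).exists
  have hcont : ContinuousOn (F.transportCost m n p) (Icc 0 r) := fun q hq =>
    have hpq : 0 < p + q := add_pos_of_pos_of_nonneg hp0 hq.1
    (F.hasDerivAt_transportCost_right hpq.ne' (weightedMean_mem F.convex_S hm hn hp0.le hq.1
      hpq)).continuousAt.continuousWithinAt
  obtain ⟨q, hq, hqI⟩ := intermediate_value_Ioo hr hcont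
    ⟨(F.transportCost_zero_right m n hp0.ne').trans_lt hI, hIr⟩
  refine ⟨q, ⟨hq.1, hqI⟩, fun s ⟨hs, hsI⟩ => ?_⟩
  exact (F.strictMonoOn_transportCost_right hm hn hmn hp0).injOn hs.le hq.1.le
    (hsI.trans hqI.symm)

lemma strictAntiOn_of_transportCost_eq {s : Set ℝ} {f : ℝ → ℝ} (hm : m ∈ F.S) (hn : n ∈ F.S)
    (hmn : m ≠ n) (hs : ∀ p ∈ s, 0 < p)
    (hf : ∀ p ∈ s, 0 < f p ∧ F.transportCost m n p (f p) = I) : StrictAntiOn f s := by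
  intro p hp r hr hpr
  have hcost : F.transportCost m n p (f r) < F.transportCost m n p (f p) :=
    calc F.transportCost m n p (f r)
        < F.transportCost m n r (f r) :=
          F.strictMonoOn_transportCost_left hm hn hmn (hf r hr).1 (hs p hp).le (hs r hr).le hpr
      _ = F.transportCost m n p (f p) := (hf r hr).2.trans (hf p hp).2.symm
  exact ((F.strictMonoOn_transportCost_right hm hn hmn (hs p hp)).lt_iff_lt
    (hf r hr).1.le (hf p hp).1.le).1 hcost

lemma tendsto_of_transportCost_eq {f : ℝ → ℝ} (hm : m ∈ F.S) (hn : n ∈ F.S) (hmn : m ≠ n)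
    (hI : 0 < I) (hf : ∀ᶠ p in atTop, 0 < f p ∧ F.transportCost m n p (f p) = I) :
    Tendsto f atTop (𝓝 (I / F.d n m)) := by
  have hd := F.d_pos hn hm hmn.symm
  refine tendsto_order.2 ⟨fun c hc => ?_, fun c hc => ?_⟩
  · filter_upwards [hf, eventually_ge_atTop 0] with p ⟨hfp, hfI⟩ hp
    refine hc.trans_le ((div_le_iff₀ hd).2 ?_)
    rw [← hfI]
    exact F.transportCost_le_mul_d_right hm hn hp hfp.le (add_pos_of_nonneg_of_pos hp hfp)
  · have hc0 : 0 < c := (div_pos hI hd).trans hc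
    have hIc : ∀ᶠ p in atTop, I < F.transportCost m n p c :=
      (F.tendsto_transportCost_left hm hn hc0).eventually_const_lt ((div_lt_iff₀ hd).1 hc)
    filter_upwards [hf, eventually_gt_atTop 0, hIc] with p ⟨hfp, hfI⟩ hp hlt
    rw [← hfI] at hlt
    exact ((F.strictMonoOn_transportCost_right hm hn hmn hp).lt_iff_lt hfp.le hc0.le).1 hlt

end SPEF

theorem statement_2_general (F : SPEF) {m n : ℝ} (hm : m ∈ F.S) (hn : n ∈ F.S) (hmn : m ≠ n) :
    (∀ p : ℝ, 0 < p →
      StrictMonoOn (F.transportCost m n p) (Ici 0) ∧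
      F.transportCost m n p 0 = 0 ∧
      Tendsto (F.transportCost m n p) atTop (𝓝 (p * F.d m n)) ∧
      ∀ q : ℝ, 0 ≤ q →
        HasDerivAt (F.transportCost m n p) (F.d n (weightedMean m n p q)) q) ∧
    (∀ I : ℝ, 0 < I →
      (∀ p : ℝ, I / F.d m n < p → ∃! q : ℝ, 0 < q ∧ F.transportCost m n p q = I) ∧
      ∀ f : ℝ → ℝ,
        (∀ p ∈ Ioi (I / F.d m n), 0 < f p ∧ F.transportCost m n p (f p) = I) →
        StrictAntiOn f (Ioi (I / F.d m n)) ∧ Tendsto f atTop (𝓝 (I / F.d n m))) := by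
  refine ⟨fun p hp => ⟨F.strictMonoOn_transportCost_right hm hn hmn hp,
    F.transportCost_zero_right m n hp.ne', F.tendsto_transportCost_right hm hn hp,
    fun q hq => ?_⟩, fun I hI => ⟨fun p hp => F.existsUnique_transportCost_eq hm hn hmn hI hp,
    fun f hf => ⟨?_, ?_⟩⟩⟩
  · have hpq : 0 < p + q := add_pos_of_pos_of_nonneg hp hq
    exact F.hasDerivAt_transportCost_right hpq.ne'
      (weightedMean_mem F.convex_S hm hn hp.le hq hpq)
  · exact F.strictAntiOn_of_transportCost_eq hm hn hmn
      (fun p hp => (div_pos hI (F.d_pos hm hn hmn)).trans hp) hf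
  · exact F.tendsto_of_transportCost_eq hm hn hmn hI ((eventually_gt_atTop _).mono hf)

end

/-- monotonicity, limits and derivative of `N_a ↦ W_a(N₁, N_a)`, and
the induced decreasing map `N₁ ↦ N_a(N₁)` solving `W_a(N₁, N_a(N₁)) = I`. -/
theorem statement_2 {K : ℕ} [NeZero K] (M : Bandit K) (a : Fin K) (ha : a ∈ alt K) :
    (∀ N1 : ℝ, 0 < N1 →
      StrictMonoOn (fun Na => M.W a N1 Na) (Set.Ici 0) ∧
      M.W a N1 0 = 0 ∧
      Filter.Tendsto (fun Na => M.W a N1 Na) Filter.atTop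
        (nhds (N1 * M.d (M.μ 0) (M.μ a))) ∧
      (∀ Na : ℝ, 0 ≤ Na →
        HasDerivAt (fun t => M.W a N1 t) (M.d (M.μ a) (M.x1 a N1 Na)) Na)) ∧
    (∀ I : ℝ, 0 < I →
      (∀ N1 : ℝ, I / M.d (M.μ 0) (M.μ a) < N1 →
        ∃! Na : ℝ, 0 < Na ∧ M.W a N1 Na = I) ∧
      (∀ Nfun : ℝ → ℝ,
        (∀ N1 ∈ Set.Ioi (I / M.d (M.μ 0) (M.μ a)), 0 < Nfun N1 ∧ M.W a N1 (Nfun N1) = I) →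
        StrictAntiOn Nfun (Set.Ioi (I / M.d (M.μ 0) (M.μ a))) ∧
        Filter.Tendsto Nfun Filter.atTop (nhds (I / M.d (M.μ a) (M.μ 0))))) :=
  statement_2_general M.toSPEF (M.μ_mem 0) (M.μ_mem a)
    (M.μ_best a (Finset.mem_filter.1 ha).2).ne'
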